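/- arXiv:1804.02700 — 4 statements merged into one kernel-verified Lean document; each statement's English description precedes it below -/
import Mathlib

section
/- Let M and M′ be ρ×κ integer matrices. If for every abelian group A the group homomorphisms f_M, f_{M′} : A^ρ → A^κ induced by M and M′ have isomorphic kernels, then M and M′ are equivalent, i.e. there exist unimodular matrices U₁, U₂ with U₁MU₂ = M′. -/
/-- The group homomorphism `f_M : A^ρ → A^κ` induced by an integer matrix `M`,
given by `f_M(x)_j = ∑ i, M i j • x i`. -/
def matHom {ρ κ : ℕ} (A : Type*) [AddCommGroup A] (M : Matrix (Fin ρ) (Fin κ) ℤ) :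
    (Fin ρ → A) →+ (Fin κ → A) where
  toFun x := fun j => ∑ i, M i j • x i
  map_zero' := by funext j; simp
  map_add' x y := by funext j; simp [smul_add, Finset.sum_add_distrib]

namespace KerEq

/-- Equivalence of integer matrices. -/
def Eqv {m n : ℕ} (M N : Matrix (Fin m) (Fin n) ℤ) : Prop :=
  ∃ (U : Matrix (Fin m) (Fin m) ℤ) (V : Matrix (Fin n) (Fin n) ℤ),
    IsUnit U ∧ IsUnit V ∧ U * M * V = N

lemma Eqv.refl {m n : ℕ} (M : Matrix (Fin m) (Fin n) ℤ) : Eqv M M :=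
  ⟨1, 1, isUnit_one, isUnit_one, by simp⟩

lemma Eqv.trans {m n : ℕ} {M N P : Matrix (Fin m) (Fin n) ℤ} (h : Eqv M N) (h' : Eqv N P) :
    Eqv M P := by
  obtain ⟨U, V, hU, hV, rfl⟩ := h
  obtain ⟨U', V', hU', hV', rfl⟩ := h'
  exact ⟨U' * U, V * V', hU'.mul hU, hV.mul hV', by simp only [Matrix.mul_assoc]⟩

lemma Eqv.symm {m n : ℕ} {M N : Matrix (Fin m) (Fin n) ℤ} (h : Eqv M N) : Eqv N M := by
  obtain ⟨U, V, ⟨u, rfl⟩, ⟨v, rfl⟩, rfl⟩ := h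
  refine ⟨↑u⁻¹, ↑v⁻¹, Units.isUnit _, Units.isUnit _, ?_⟩
  have h1 : (u⁻¹).1 * u.1 = 1 := u.inv_mul
  have h2 : v.1 * (v⁻¹).1 = 1 := v.mul_inv
  calc _ = ((u⁻¹).1 * u.1) * M * (v.1 * (v⁻¹).1) := by
        simp only [Matrix.mul_assoc]
    _ = M := by rw [h1, h2]; simp

lemma Eqv.left {m n : ℕ} (M : Matrix (Fin m) (Fin n) ℤ) {U : Matrix (Fin m) (Fin m) ℤ}
    (hU : IsUnit U) : Eqv M (U * M) := ⟨U, 1, hU, isUnit_one, by simp⟩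

lemma Eqv.right {m n : ℕ} (M : Matrix (Fin m) (Fin n) ℤ) {V : Matrix (Fin n) (Fin n) ℤ}
    (hV : IsUnit V) : Eqv M (M * V) := ⟨1, V, isUnit_one, hV, by simp⟩

lemma isUnit_transvection {m : ℕ} {i j : Fin m} (h : i ≠ j) (c : ℤ) :
    IsUnit (Matrix.transvection i j c) := by
  rw [Matrix.isUnit_iff_isUnit_det, Matrix.det_transvection_of_ne i j h]
  exact isUnit_one

lemma isUnit_perm {m : ℕ} (σ : Equiv.Perm (Fin m)) :
    IsUnit ((1 : Matrix (Fin m) (Fin m) ℤ).submatrix σ id) := by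
  rw [Matrix.isUnit_iff_isUnit_det, Matrix.det_permute]
  simp

lemma isUnit_perm' {m : ℕ} (σ : Equiv.Perm (Fin m)) :
    IsUnit ((1 : Matrix (Fin m) (Fin m) ℤ).submatrix id σ) := by
  rw [Matrix.isUnit_iff_isUnit_det, Matrix.det_permute']
  simp

lemma Eqv.perm {m n : ℕ} (M : Matrix (Fin m) (Fin n) ℤ) (σ : Equiv.Perm (Fin m))
    (τ : Equiv.Perm (Fin n)) : Eqv M (M.submatrix σ τ) := by
  refine ⟨_, _, isUnit_perm σ, isUnit_perm' τ, ?_⟩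
  ext i j
  simp [Matrix.mul_apply, Matrix.one_apply]

/-- block diagonal matrix -/
def blk {m n : ℕ} (a : ℤ) (M : Matrix (Fin m) (Fin n) ℤ) :
    Matrix (Fin (m + 1)) (Fin (n + 1)) ℤ :=
  Matrix.of (Fin.cons (Fin.cons a 0) (fun i => Fin.cons 0 (M i)))

lemma blk_mul {m n k : ℕ} (a b : ℤ) (M : Matrix (Fin m) (Fin n) ℤ)
    (N : Matrix (Fin n) (Fin k) ℤ) : blk a M * blk b N = blk (a * b) (M * N) := by
  ext i j
  refine Fin.cases ?_ (fun i => ?_) i <;> refine Fin.cases ?_ (fun j => ?_) j <;>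
    simp [blk, Matrix.mul_apply, Fin.sum_univ_succ]

lemma blk_one {m : ℕ} : blk 1 (1 : Matrix (Fin m) (Fin m) ℤ) = 1 := by
  ext i j
  refine Fin.cases ?_ (fun i => ?_) i <;> refine Fin.cases ?_ (fun j => ?_) j <;>
    simp [blk, Matrix.one_apply, Fin.succ_ne_zero, (Fin.succ_ne_zero _).symm]

lemma isUnit_blk {m : ℕ} {a : ℤ} (ha : IsUnit a) {U : Matrix (Fin m) (Fin m) ℤ}
    (hU : IsUnit U) : IsUnit (blk a U) := by
  obtain ⟨a, rfl⟩ := ha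
  obtain ⟨u, rfl⟩ := hU
  refine ⟨⟨blk a u, blk ↑a⁻¹ ↑u⁻¹, ?_, ?_⟩, rfl⟩
  · rw [blk_mul, ← Units.val_mul, ← Units.val_mul]; simp [blk_one]
  · rw [blk_mul, ← Units.val_mul, ← Units.val_mul]; simp [blk_one]

lemma Eqv.blk {m n : ℕ} {M N : Matrix (Fin m) (Fin n) ℤ} (h : Eqv M N) (a : ℤ) :
    Eqv (blk a M) (blk a N) := by
  obtain ⟨U, V, hU, hV, rfl⟩ := h
  exact ⟨KerEq.blk 1 U, KerEq.blk 1 V, isUnit_blk isUnit_one hU, isUnit_blk isUnit_one hV, by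
    simp [blk_mul]⟩

lemma Eqv.blk_natAbs {m n : ℕ} (M : Matrix (Fin m) (Fin n) ℤ) (a : ℤ) :
    Eqv (KerEq.blk a M) (KerEq.blk (a.natAbs : ℤ) M) := by
  rcases Int.natAbs_eq a with h | h
  · rw [← h]; exact Eqv.refl _
  · have h1 : (a.natAbs : ℤ) = (-1) * a := by omega
    rw [h1]
    have := Eqv.left (KerEq.blk a M) (isUnit_blk (a := -1) (by simp) (isUnit_one (M := Matrix (Fin m) (Fin m) ℤ)))
    rwa [blk_mul, Matrix.one_mul] at this

/-- clearing matrix -/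
def low {m : ℕ} (p : Fin m → ℤ) : Matrix (Fin (m + 1)) (Fin (m + 1)) ℤ :=
  Matrix.of (Fin.cons (Fin.cons 1 0)
    (fun i => Fin.cons (p i) ((1 : Matrix (Fin m) (Fin m) ℤ) i)))

lemma low_mul {m : ℕ} (p q : Fin m → ℤ) : low p * low q = low (p + q) := by
  ext i j
  refine Fin.cases ?_ (fun i => ?_) i <;> refine Fin.cases ?_ (fun j => ?_) j <;>
    simp [low, Matrix.mul_apply, Fin.sum_univ_succ, Matrix.one_apply]

lemma low_zero {m : ℕ} : low (0 : Fin m → ℤ) = 1 := by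
  rw [← blk_one]; rfl

lemma isUnit_low {m : ℕ} (p : Fin m → ℤ) : IsUnit (low p) :=
  ⟨⟨low p, low (-p), by simp [low_mul, low_zero], by simp [low_mul, low_zero]⟩, rfl⟩

lemma isUnit_lowT {m : ℕ} (p : Fin m → ℤ) : IsUnit (low p).transpose :=
  ⟨⟨(low p).transpose, (low (-p)).transpose,
    by simp [← Matrix.transpose_mul, low_mul, low_zero],
    by simp [← Matrix.transpose_mul, low_mul, low_zero]⟩, rfl⟩

lemma exists_min {m n : ℕ} (M : Matrix (Fin m) (Fin n) ℤ) (hM : M ≠ 0) :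
    ∃ N, Eqv M N ∧ ∃ i j, N i j ≠ 0 ∧ ∀ k l, N i j ∣ N k l := by
  classical
  have hex : ∃ c : ℕ, ∃ N, Eqv M N ∧ ∃ i j, N i j ≠ 0 ∧ (N i j).natAbs = c := by
    by_contra hcon
    push Not at hcon
    apply hM
    ext i j
    by_contra h0
    exact hcon _ M (Eqv.refl M) i j h0 rfl
  have hmin : ∀ N, Eqv M N → ∀ i j, N i j ≠ 0 → Nat.find hex ≤ (N i j).natAbs :=
    fun N hN i j h0 => Nat.find_min' hex ⟨N, hN, i, j, h0, rfl⟩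
  have key : ∀ N, Eqv M N → ∀ i j, N i j ≠ 0 → (N i j).natAbs = Nat.find hex →
      (∀ k, N i j ∣ N k j) ∧ (∀ l, N i j ∣ N i l) := by
    intro N hN i j h0 hc
    constructor
    · intro k
      by_cases hki : k = i
      · rw [hki]
      by_contra hd
      have hE := hN.trans (Eqv.left N (isUnit_transvection hki (-(N k j / N i j))))
      have hv : (Matrix.transvection k i (-(N k j / N i j)) * N) k j = N k j % N i j := by
        rw [Matrix.transvection_mul_apply_same, Int.emod_def]; ring
      have h1 : N k j % N i j ≠ 0 := fun h => hd (Int.dvd_of_emod_eq_zero h)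
      have := hmin _ hE k j (by rw [hv]; exact h1)
      rw [hv] at this
      have h2 := Int.emod_lt_abs (N k j) h0
      have h3 := Int.emod_nonneg (N k j) h0
      rw [Int.abs_eq_natAbs] at h2
      omega
    · intro l
      by_cases hlj : l = j
      · rw [hlj]
      by_contra hd
      have hE := hN.trans (Eqv.right N (isUnit_transvection (Ne.symm hlj) (-(N i l / N i j))))
      have hv : (N * Matrix.transvection j l (-(N i l / N i j))) i l = N i l % N i j := by
        rw [Matrix.mul_transvection_apply_same, Int.emod_def]; ring
      have h1 : N i l % N i j ≠ 0 := fun h => hd (Int.dvd_of_emod_eq_zero h)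
      have := hmin _ hE i l (by rw [hv]; exact h1)
      rw [hv] at this
      have h2 := Int.emod_lt_abs (N i l) h0
      have h3 := Int.emod_nonneg (N i l) h0
      rw [Int.abs_eq_natAbs] at h2
      omega
  obtain ⟨N, hN, i, j, h0, hc⟩ := Nat.find_spec hex
  refine ⟨N, hN, i, j, h0, fun k l => ?_⟩
  obtain ⟨hcol, hrow⟩ := key N hN i j h0 hc
  by_cases hki : k = i
  · rw [hki]; exact hrow l
  obtain ⟨q, hq⟩ := hcol k
  set N1 := Matrix.transvection k i (-q) * N with hN1
  set N2 := Matrix.transvection i k (1 : ℤ) * N1 with hN2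
  have hE : Eqv M N2 := (hN.trans (Eqv.left N (isUnit_transvection hki _))).trans
    (Eqv.left N1 (isUnit_transvection (Ne.symm hki) _))
  have hv : ∀ l, N2 i l = N i l + (N k l - q * N i l) := by
    intro l
    rw [hN2, Matrix.transvection_mul_apply_same, hN1, Matrix.transvection_mul_apply_same,
      Matrix.transvection_mul_apply_of_ne _ _ _ _ (Ne.symm hki)]
    ring
  have hv0 : N2 i j = N i j := by rw [hv, hq]; ring
  have h2 := (key N2 hE i j (by rwa [hv0]) (by rwa [hv0])).2 l
  rw [hv0, hv] at h2
  have h3 := (Int.dvd_add_right (hrow l)).1 h2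
  have h4 := Int.dvd_add h3 (Dvd.dvd.mul_left (hrow l) q)
  simpa using h4

/-- rectangular diagonal matrix -/
def diagM (m n : ℕ) (d : ℕ → ℕ) : Matrix (Fin m) (Fin n) ℤ :=
  Matrix.of fun i j => if i.1 = j.1 then (d i.1 : ℤ) else 0

lemma snf_zero {m n : ℕ} (M : Matrix (Fin m) (Fin n) ℤ) (h : M = 0) :
    ∃ d : ℕ → ℕ, (∀ i, d i ∣ d (i + 1)) ∧ (∀ i, n ≤ i → d i = 0) ∧ Eqv M (diagM m n d) := by
  refine ⟨0, by simp, by simp, ?_⟩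
  have : diagM m n 0 = M := by rw [h]; ext; simp [diagM]
  rw [this]; exact Eqv.refl M

lemma snf : ∀ (m n : ℕ) (M : Matrix (Fin m) (Fin n) ℤ),
    ∃ d : ℕ → ℕ, (∀ i, d i ∣ d (i + 1)) ∧ (∀ i, n ≤ i → d i = 0) ∧ Eqv M (diagM m n d)
  | 0, n, M => snf_zero M (by ext i; exact i.elim0)
  | m + 1, 0, M => snf_zero M (by ext i j; exact j.elim0)
  | m + 1, n + 1, M => by
    by_cases hM : M = 0
    · exact snf_zero M hM
    obtain ⟨N, hN, i, j, h0, hd⟩ := exists_min M hM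
    obtain ⟨P, hP, hP0, hPd⟩ : ∃ P, Eqv M P ∧ P 0 0 ≠ 0 ∧ ∀ k l, P 0 0 ∣ P k l := by
      refine ⟨_, hN.trans (Eqv.perm N (Equiv.swap 0 i) (Equiv.swap 0 j)), ?_, ?_⟩
      · simpa using h0
      · intro k l; simpa using hd _ _
    choose Q hQ using hPd
    set a := P 0 0 with ha
    have hQ0 : Q 0 0 = 1 := by
      have := hQ 0 0
      rw [← ha] at this
      exact (mul_right_injective₀ hP0 (by simpa using this)).symm
    let R : Matrix (Fin m) (Fin n) ℤ := fun k l => Q k.succ l.succ - Q k.succ 0 * Q 0 l.succ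
    have hRa : ∀ k l, (a • R) k l = a * (Q k.succ l.succ - Q k.succ 0 * Q 0 l.succ) :=
      fun _ _ => rfl
    have hE : Eqv P (blk a (a • R)) := by
      refine ⟨low (fun k => - Q k.succ 0), (low (fun l => - Q 0 l.succ)).transpose,
        isUnit_low _, isUnit_lowT _, ?_⟩
      ext k l
      refine Fin.cases ?_ (fun k => ?_) k <;> refine Fin.cases ?_ (fun l => ?_) l <;>
        simp [low, blk, hRa, Matrix.mul_apply, Fin.sum_univ_succ, Matrix.one_apply, hQ, hQ0,
          -Matrix.smul_apply, -Pi.smul_apply] <;> ring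
    have hR : ∃ R' : Matrix (Fin m) (Fin n) ℤ, a • R = (a.natAbs : ℤ) • R' := by
      rcases Int.natAbs_eq a with h | h
      · exact ⟨R, by rw [← h]⟩
      · refine ⟨-R, ?_⟩
        have : (a.natAbs : ℤ) = - a := by omega
        rw [this]; simp
    obtain ⟨R', hR'⟩ := hR
    obtain ⟨d, hd1, hd2, hd3⟩ := snf m n R'
    refine ⟨fun i => Nat.casesOn i a.natAbs (fun k => a.natAbs * d k), ?_, ?_, ?_⟩
    · rintro (_ | i)
      · exact Dvd.intro _ rfl
      · exact Nat.mul_dvd_mul_left _ (hd1 i)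
    · rintro (_ | i) hi
      · omega
      · show a.natAbs * d i = 0
        rw [hd2 i (by omega), mul_zero]
    · have h1 : Eqv ((a.natAbs : ℤ) • R') ((a.natAbs : ℤ) • diagM m n d) := by
        obtain ⟨U, V, hU, hV, h⟩ := hd3
        exact ⟨U, V, hU, hV, by rw [← h]; simp⟩
      have h2 := ((hP.trans hE).trans (Eqv.blk_natAbs _ a))
      rw [hR'] at h2
      have h3 := h2.trans (h1.blk _)
      convert h3 using 1
      ext k l
      refine Fin.cases ?_ (fun k => ?_) k <;> refine Fin.cases ?_ (fun l => ?_) l <;>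
        simp [blk, diagM]

lemma matHom_mul {m n k : ℕ} (A : Type) [AddCommGroup A] (M : Matrix (Fin m) (Fin n) ℤ)
    (N : Matrix (Fin n) (Fin k) ℤ) (x : Fin m → A) :
    matHom A (M * N) x = matHom A N (matHom A M x) := by
  funext j
  simp only [matHom, AddMonoidHom.coe_mk, ZeroHom.coe_mk, Matrix.mul_apply, Finset.sum_smul,
    Finset.smul_sum]
  rw [Finset.sum_comm]
  refine Finset.sum_congr rfl fun i _ => Finset.sum_congr rfl fun l _ => ?_
  rw [smul_smul, mul_comm]

lemma matHom_one {m : ℕ} (A : Type) [AddCommGroup A] (x : Fin m → A) :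
    matHom A (1 : Matrix (Fin m) (Fin m) ℤ) x = x := by
  funext j
  simp [matHom, Matrix.one_apply, ite_smul]

lemma card_ker_eqv {m n : ℕ} (A : Type) [AddCommGroup A] {M N : Matrix (Fin m) (Fin n) ℤ}
    (h : Eqv M N) : Nat.card (matHom A M).ker = Nat.card (matHom A N).ker := by
  obtain ⟨U, V, ⟨u, rfl⟩, ⟨v, rfl⟩, rfl⟩ := h
  let e : (Fin m → A) ≃ (Fin m → A) :=
    { toFun := matHom A u.1
      invFun := matHom A (u⁻¹).1
      left_inv := fun x => by rw [← matHom_mul, u.mul_inv, matHom_one]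
      right_inv := fun x => by rw [← matHom_mul, u.inv_mul, matHom_one] }
  symm
  refine Nat.card_congr (e.subtypeEquiv fun x => ?_)
  rw [AddMonoidHom.mem_ker, AddMonoidHom.mem_ker, matHom_mul, matHom_mul]
  show _ ↔ matHom A M (matHom A u.1 x) = 0
  constructor
  · intro h
    have := congrArg (matHom A (v⁻¹).1) h
    rwa [← matHom_mul, v.mul_inv, matHom_one, map_zero] at this
  · intro h; rw [h, map_zero]

/-- number of `d`-torsion points of `ZMod n` -/
noncomputable def tor (n d : ℕ) : ℕ := Nat.card {y : ZMod n // (d : ℤ) • y = 0}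

lemma card_ker_diag {m n : ℕ} (N : ℕ) (d : ℕ → ℕ) (hd : ∀ i, n ≤ i → d i = 0) :
    Nat.card (matHom (ZMod N) (diagM m n d)).ker = ∏ i : Fin m, tor N (d i) := by
  unfold tor
  rw [← Nat.card_pi]
  refine Nat.card_congr (Equiv.trans (Equiv.subtypeEquivRight fun x => ?_)
    (Equiv.subtypePiEquivPi (p := fun (i : Fin m) (y : ZMod N) => (d i : ℤ) • y = 0)))
  rw [AddMonoidHom.mem_ker]
  have hs : ∀ (i : Fin m) (j : Fin n), i.1 = j.1 →
      matHom (ZMod N) (diagM m n d) x j = (d i : ℤ) • x i := by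
    intro i j hij
    simp only [matHom, AddMonoidHom.coe_mk, ZeroHom.coe_mk, diagM, Matrix.of_apply]
    rw [Finset.sum_eq_single i]
    · rw [if_pos hij]
    · intro b _ hb
      rw [if_neg (fun h => hb (Fin.ext (h.trans hij.symm))), zero_smul]
    · simp
  constructor
  · intro h i
    by_cases hi : i.1 < n
    · rw [← hs i ⟨i, hi⟩ rfl, h]; rfl
    · rw [hd i (by omega)]; simp
  · intro h
    funext j
    by_cases hj : j.1 < m
    · rw [hs ⟨j, hj⟩ j rfl]; exact h _
    · simp only [matHom, AddMonoidHom.coe_mk, ZeroHom.coe_mk, diagM, Matrix.of_apply]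
      refine Finset.sum_eq_zero fun i _ => ?_
      rw [if_neg (by omega), zero_smul]

lemma tor_pos (n d : ℕ) [NeZero n] : 0 < tor n d := by
  have : Nonempty {y : ZMod n // (d : ℤ) • y = 0} := ⟨⟨0, by simp⟩⟩
  exact Nat.card_pos

lemma tor_le (n d : ℕ) [NeZero n] : tor n d ≤ n := by
  have := Nat.card_le_card_of_injective (Subtype.val : {y : ZMod n // (d : ℤ) • y = 0} → ZMod n)
    Subtype.val_injective
  rwa [Nat.card_zmod] at this

lemma tor_eq_iff (n d : ℕ) [NeZero n] : tor n d = n ↔ n ∣ d := by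
  constructor
  · intro h
    have hb : Function.Bijective (Subtype.val : {y : ZMod n // (d : ℤ) • y = 0} → ZMod n) := by
      rw [Nat.bijective_iff_injective_and_card]
      exact ⟨Subtype.val_injective, by rw [Nat.card_zmod]; exact h⟩
    obtain ⟨⟨y, hy⟩, h1⟩ := hb.2 1
    simp only at h1
    subst h1
    rw [← ZMod.natCast_eq_zero_iff]
    simpa using hy
  · intro h
    have : ∀ y : ZMod n, (d : ℤ) • y = 0 := by
      intro y
      have := (ZMod.natCast_eq_zero_iff d n).2 h
      simp [this]
    unfold tor
    rw [Nat.card_congr (Equiv.subtypeUnivEquiv this), Nat.card_zmod]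

lemma step {m : ℕ} (d e : ℕ → ℕ) (hd : ∀ i j, i ≤ j → d i ∣ d j)
    (i : Fin m) (hlt : ∀ j : Fin m, j < i → d j = e j) (n : ℕ) (hn : n ≠ 0)
    (h : ∏ j : Fin m, tor n (d j) = ∏ j : Fin m, tor n (e j)) (hi : n ∣ d i) : n ∣ e i := by
  have : NeZero n := ⟨hn⟩
  rw [← tor_eq_iff]
  by_contra hne
  have hlt' := lt_of_le_of_ne (tor_le n (e i)) hne
  have hge : ∀ j : Fin m, i ≤ j → tor n (d j) = n := fun j hj =>
    (tor_eq_iff _ _).2 (hi.trans (hd i j hj))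
  refine absurd h (ne_of_gt (Finset.prod_lt_prod (fun j _ => tor_pos _ _) ?_
    ⟨i, Finset.mem_univ i, ?_⟩))
  · intro j _
    rcases lt_or_ge j i with hj | hj
    · rw [hlt j hj]
    · rw [hge j hj]; exact tor_le _ _
  · rw [hge i le_rfl]; exact hlt'

lemma eq_of_dvds (a b : ℕ) (h : ∀ n, n ≠ 0 → (n ∣ a ↔ n ∣ b)) : a = b := by
  rcases Nat.eq_zero_or_pos a with ha | ha
  · subst ha
    by_contra hb
    have := Nat.le_of_dvd (by omega) ((h (b + 1) (by omega)).1 (dvd_zero _))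
    omega
  · rcases Nat.eq_zero_or_pos b with hb | hb
    · subst hb
      have := Nat.le_of_dvd ha ((h (a + 1) (by omega)).2 (dvd_zero _))
      omega
    · exact Nat.dvd_antisymm ((h a (by omega)).1 dvd_rfl) ((h b (by omega)).2 dvd_rfl)

lemma diag_unique {m : ℕ} (d e : ℕ → ℕ) (hd : ∀ i, d i ∣ d (i + 1)) (he : ∀ i, e i ∣ e (i + 1))
    (h : ∀ n : ℕ, n ≠ 0 → ∏ j : Fin m, tor n (d j) = ∏ j : Fin m, tor n (e j)) :
    ∀ i : Fin m, d i = e i := by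
  have hd' : ∀ i j, i ≤ j → d i ∣ d j := fun i j hij =>
    Nat.le_induction dvd_rfl (fun k _ ih => ih.trans (hd k)) j hij
  have he' : ∀ i j, i ≤ j → e i ∣ e j := fun i j hij =>
    Nat.le_induction dvd_rfl (fun k _ ih => ih.trans (he k)) j hij
  intro i
  induction i using WellFoundedLT.induction with
  | ind i ih =>
    refine eq_of_dvds _ _ fun n hn => ⟨?_, ?_⟩
    · exact step d e hd' i ih n hn (h n hn)
    · exact step e d he' i (fun j hj => (ih j hj).symm) n hn (h n hn).symm

end KerEq

/-- If for every abelian group A the induced homomorphisms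
`f_M, f_{M'} : A^ρ → A^κ` have isomorphic kernels, then the ρ×κ integer
matrices M and M' are equivalent via unimodular matrices. -/
theorem isomorphic_kernels_implies_equivalent (ρ κ : ℕ)
    (M M' : Matrix (Fin ρ) (Fin κ) ℤ)
    (hker : ∀ (A : Type) [AddCommGroup A],
      Nonempty ((matHom A M).ker ≃+ (matHom A M').ker)) :
    ∃ (U₁ : Matrix (Fin ρ) (Fin ρ) ℤ) (U₂ : Matrix (Fin κ) (Fin κ) ℤ),
      IsUnit U₁.det ∧ IsUnit U₂.det ∧ U₁ * M * U₂ = M' := by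
  obtain ⟨d, hd1, hd2, hd3⟩ := KerEq.snf ρ κ M
  obtain ⟨e, he1, he2, he3⟩ := KerEq.snf ρ κ M'
  have hde := KerEq.diag_unique (m := ρ) d e hd1 he1 (fun n _ => by
    rw [← KerEq.card_ker_diag (n := κ) n d hd2, ← KerEq.card_ker_diag (n := κ) n e he2,
      ← KerEq.card_ker_eqv _ hd3, ← KerEq.card_ker_eqv _ he3]
    exact Nat.card_congr (hker (ZMod n)).some.toEquiv)
  have hD : KerEq.diagM ρ κ d = KerEq.diagM ρ κ e := by
    ext i j
    simp [KerEq.diagM, hde i]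
  rw [hD] at hd3
  obtain ⟨U, V, hU, hV, h⟩ := hd3.trans he3.symm
  exact ⟨U, V, (Matrix.isUnit_iff_isUnit_det U).1 hU, (Matrix.isUnit_iff_isUnit_det V).1 hV, h⟩
end

section
/- Let D and D′ be ρ×κ diagonal integer matrices, each with non-negative diagonal entries forming a decreasing divisibility chain (entry j divides entry j−1 for all j ≥ 1). Suppose that the kernels of the induced homomorphisms f_D, f_{D′} : A^ρ → A^κ are isomorphic for A = ℚ and for A = ℤ/mℤ for every integer m > 1. Then D = D′. -/
noncomputable def tors (m : ℕ) (c : ℤ) : ℕ := Nat.card {x : ZMod m // c • x = 0}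

lemma tors_pos (m : ℕ) (hm : 1 < m) (c : ℤ) : 0 < tors m c := by
  have : NeZero m := ⟨by omega⟩
  have : Nonempty {x : ZMod m // c • x = 0} := ⟨⟨0, by simp⟩⟩
  exact Nat.card_pos

lemma tors_le (m : ℕ) (hm : 1 < m) (c : ℤ) : tors m c ≤ m := by
  have : NeZero m := ⟨by omega⟩
  have h := Nat.card_le_card_of_injective
    (Subtype.val : {x : ZMod m // c • x = 0} → ZMod m) Subtype.val_injective
  simpa [tors] using h

lemma tors_eq_iff (m : ℕ) (hm : 1 < m) (c : ℤ) : tors m c = m ↔ (m : ℤ) ∣ c := by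
  have : NeZero m := ⟨by omega⟩
  constructor
  · intro h
    have hb := (Nat.bijective_iff_injective_and_card
      (Subtype.val : {x : ZMod m // c • x = 0} → ZMod m)).2
      ⟨Subtype.val_injective, by simpa [tors] using h⟩
    obtain ⟨⟨y, hy⟩, h1⟩ := hb.2 1
    simp only at h1
    subst h1
    rw [← ZMod.intCast_zmod_eq_zero_iff_dvd]
    simpa using hy
  · intro h
    rw [← ZMod.intCast_zmod_eq_zero_iff_dvd] at h
    have : ∀ x : ZMod m, c • x = 0 := fun x => by rw [zsmul_eq_mul, h, zero_mul]
    unfold tors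
    rw [Nat.card_congr (Equiv.subtypeUnivEquiv this)]
    simp

lemma card_ker (ρ κ m : ℕ) (D : Matrix (Fin ρ) (Fin κ) ℤ)
    (hD : ∀ (i : Fin ρ) (j : Fin κ), (i : ℕ) ≠ (j : ℕ) → D i j = 0) (c : ℕ → ℤ)
    (hc : ∀ (i : Fin ρ) (j : Fin κ), (i : ℕ) = (j : ℕ) → c i = D i j)
    (hc0 : ∀ i, κ ≤ i → c i = 0) :
    Nat.card (matHom (ZMod m) D).ker = ∏ i : Fin ρ, tors m (c i) := by
  unfold tors
  rw [← Nat.card_pi]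
  have key : ∀ x : Fin ρ → ZMod m,
      x ∈ (matHom (ZMod m) D).ker ↔ ∀ i : Fin ρ, c i • x i = 0 := by
    intro x
    rw [AddMonoidHom.mem_ker]
    have hs : ∀ (i : Fin ρ) (j : Fin κ), (i : ℕ) = j →
        matHom (ZMod m) D x j = c i • x i := by
      intro i j hij
      show ∑ i, D i j • x i = _
      rw [Finset.sum_eq_single i, hc i j hij]
      · intro b _ hb
        rw [hD b j, zero_smul]
        intro h
        exact hb (Fin.ext (h.trans hij.symm))
      · simp
    constructor
    · intro h i
      by_cases hi : (i : ℕ) < κ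
      · rw [← hs i ⟨i, hi⟩ rfl, h]; rfl
      · rw [hc0 i (by omega), zero_smul]
    · intro h
      funext j
      by_cases hj : (j : ℕ) < ρ
      · rw [hs ⟨j, hj⟩ j rfl, h]; rfl
      · show ∑ i, D i j • x i = 0
        apply Finset.sum_eq_zero
        intro i _
        rw [hD i j (by omega), zero_smul]
  exact Nat.card_congr ((Equiv.subtypeEquivRight key).trans 
    (Equiv.subtypePiEquivPi (p := fun (i : Fin ρ) (x : ZMod m) => c i • x = 0)))

lemma step (n ρ : ℕ) (hn : n ≤ ρ) (c c' : ℕ → ℤ)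
    (hch : ∀ k, k + 1 < n → c (k + 1) ∣ c k)
    (hp : ∀ m, 1 < m → ∏ i : Fin ρ, tors m (c i) = ∏ i : Fin ρ, tors m (c' i))
    (k : ℕ) (hk : k < n) (heq : ∀ i, k < i → c i = c' i) (m : ℕ) (hm : 1 < m)
    (hd : (m : ℤ) ∣ c k) : (m : ℤ) ∣ c' k := by
  have hall : ∀ t, t ≤ k → (m : ℤ) ∣ c (k - t) := by
    intro t
    induction t with
    | zero => intro _; simpa using hd
    | succ t ih =>
      intro ht
      have h1 := hch (k - (t + 1)) (by omega)
      rw [show k - (t + 1) + 1 = k - t by omega] at h1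
      exact (ih (by omega)).trans h1
  have hle : ∀ i : Fin ρ, tors m (c' i) ≤ tors m (c i) := by
    intro i
    by_cases hi : (i : ℕ) ≤ k
    · have h2 := hall (k - i) (by omega)
      rw [show k - (k - (i : ℕ)) = i by omega] at h2
      rw [(tors_eq_iff m hm _).2 h2]
      exact tors_le m hm _
    · rw [heq i (by omega)]
  rw [← tors_eq_iff m hm]
  by_contra hne
  have hlt := lt_of_le_of_ne (tors_le m hm (c' k)) hne
  have := Finset.prod_lt_prod (s := (Finset.univ : Finset (Fin ρ)))
    (f := fun i : Fin ρ => tors m (c' i)) (g := fun i : Fin ρ => tors m (c i))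
    (fun i _ => tors_pos m hm _) (fun i _ => hle i)
    ⟨⟨k, by omega⟩, Finset.mem_univ _, by
      show tors m (c' k) < tors m (c k)
      rw [(tors_eq_iff m hm (c k)).2 hd]; exact hlt⟩
  exact absurd (hp m hm) (ne_of_gt this)

lemma dvd_of_forall (a b : ℤ) (ha : 0 ≤ a) (hb : 0 ≤ b)
    (h : ∀ m : ℕ, 1 < m → (m : ℤ) ∣ a → (m : ℤ) ∣ b) : a ∣ b := by
  lift a to ℕ using ha
  lift b to ℕ using hb
  rcases Nat.lt_trichotomy a 1 with h0 | h0 | h0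
  · obtain rfl : a = 0 := by omega
    have := h (b + 2) (by omega) (by simp)
    have := Nat.eq_zero_of_dvd_of_lt (Int.natCast_dvd_natCast.1 this) (by omega)
    simp [this]
  · simp [h0]
  · exact h a h0 dvd_rfl

lemma final (n ρ : ℕ) (hn : n ≤ ρ) (c c' : ℕ → ℤ)
    (hc : ∀ k, 0 ≤ c k) (hc' : ∀ k, 0 ≤ c' k)
    (hch : ∀ k, k + 1 < n → c (k + 1) ∣ c k)
    (hch' : ∀ k, k + 1 < n → c' (k + 1) ∣ c' k)
    (h0 : ∀ k, n ≤ k → c k = c' k)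
    (hp : ∀ m, 1 < m → ∏ i : Fin ρ, tors m (c i) = ∏ i : Fin ρ, tors m (c' i)) :
    ∀ k, c k = c' k := by
  have : ∀ t, ∀ k, n ≤ k + t → c k = c' k := by
    intro t
    induction t with
    | zero => intro k hk; exact h0 k hk
    | succ t ih =>
      intro k hk
      by_cases hkn : n ≤ k
      · exact h0 k hkn
      · have heq : ∀ i, k < i → c i = c' i := fun i hi => ih i (by omega)
        exact Int.dvd_antisymm (hc k) (hc' k)
          (dvd_of_forall _ _ (hc k) (hc' k) (step n ρ hn c c' hch hp k (by omega) heq))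
          (dvd_of_forall _ _ (hc' k) (hc k) (step n ρ hn c' c hch'
            (fun m hm => (hp m hm).symm) k (by omega) (fun i hi => (heq i hi).symm)))
  exact fun k => this n k (by omega)

/-- Two ρ×κ diagonal integer matrices with non-negative diagonal
entries forming a decreasing divisibility chain are equal as soon as the
kernels of the induced homomorphisms `A^ρ → A^κ` are isomorphic for `A = ℚ`
and for `A = ℤ/mℤ` for every integer `m > 1`. -/
theorem diagonal_determined_by_kernels (ρ κ : ℕ)
    (D D' : Matrix (Fin ρ) (Fin κ) ℤ)
    (hDdiag : ∀ (i : Fin ρ) (j : Fin κ), (i : ℕ) ≠ (j : ℕ) → D i j = 0)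
    (hD'diag : ∀ (i : Fin ρ) (j : Fin κ), (i : ℕ) ≠ (j : ℕ) → D' i j = 0)
    (hDnonneg : ∀ (i : Fin ρ) (j : Fin κ), (i : ℕ) = (j : ℕ) → 0 ≤ D i j)
    (hD'nonneg : ∀ (i : Fin ρ) (j : Fin κ), (i : ℕ) = (j : ℕ) → 0 ≤ D' i j)
    (hDchain : ∀ (k : ℕ) (hk1 : k + 1 < ρ) (hk2 : k + 1 < κ),
      D ⟨k + 1, hk1⟩ ⟨k + 1, hk2⟩ ∣ D ⟨k, by omega⟩ ⟨k, by omega⟩)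
    (hD'chain : ∀ (k : ℕ) (hk1 : k + 1 < ρ) (hk2 : k + 1 < κ),
      D' ⟨k + 1, hk1⟩ ⟨k + 1, hk2⟩ ∣ D' ⟨k, by omega⟩ ⟨k, by omega⟩)
    (hQ : Nonempty ((matHom ℚ D).ker ≃+ (matHom ℚ D').ker))
    (hZmod : ∀ m : ℕ, 1 < m →
      Nonempty ((matHom (ZMod m) D).ker ≃+ (matHom (ZMod m) D').ker)) :
    D = D' := by
  classical
  let e : Matrix (Fin ρ) (Fin κ) ℤ → ℕ → ℤ := fun M i =>
    if h : i < ρ ∧ i < κ then M ⟨i, h.1⟩ ⟨i, h.2⟩ else 0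
  have he : ∀ M i (h1 : i < ρ) (h2 : i < κ), e M i = M ⟨i, h1⟩ ⟨i, h2⟩ :=
    fun M i h1 h2 => dif_pos ⟨h1, h2⟩
  have he0 : ∀ M i, ¬ (i < ρ ∧ i < κ) → e M i = 0 := fun M i h => dif_neg h
  have hee : ∀ M (i : Fin ρ) (j : Fin κ), (i : ℕ) = (j : ℕ) → e M i = M i j := by
    intro M i j hij
    rw [he M i i.2 (by omega)]
    congr 1
    exact Fin.ext hij
  have hnn : ∀ M : Matrix (Fin ρ) (Fin κ) ℤ,
      (∀ (i : Fin ρ) (j : Fin κ), (i : ℕ) = (j : ℕ) → 0 ≤ M i j) → ∀ k, 0 ≤ e M k := by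
    intro M hM k
    by_cases h : k < ρ ∧ k < κ
    · rw [he M k h.1 h.2]; exact hM _ _ rfl
    · rw [he0 M k h]
  have hmain := final (min ρ κ) ρ (min_le_left _ _) (e D) (e D')
    (hnn D hDnonneg) (hnn D' hD'nonneg)
    (fun k hk => by
      rw [he D k (by omega) (by omega), he D (k + 1) (by omega) (by omega)]
      exact hDchain k _ _)
    (fun k hk => by
      rw [he D' k (by omega) (by omega), he D' (k + 1) (by omega) (by omega)]
      exact hD'chain k _ _)
    (fun k hk => by rw [he0 D k (by omega), he0 D' k (by omega)])
    (fun m hm => by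
      rw [← card_ker ρ κ m D hDdiag (e D) (hee D) (fun i hi => he0 D i (by omega)),
        ← card_ker ρ κ m D' hD'diag (e D') (hee D') (fun i hi => he0 D' i (by omega))]
      obtain ⟨f⟩ := hZmod m hm
      exact Nat.card_congr f.toEquiv)
  ext i j
  by_cases hij : (i : ℕ) = j
  · rw [← hee D i j hij, ← hee D' i j hij, hmain]
  · rw [hDdiag i j hij, hD'diag i j hij]
end

section
/- Let M be an n×n integer matrix that is equivalent (via unimodular matrices) to the diagonal matrix with diagonal entries φ₀, …, φ_{n−1}. Then for every abelian group A, the kernel of the induced homomorphism f_M : A^n → A^n is isomorphic as an abelian group to the direct product ∏_{j=0}^{n−1} A(φ_j). -/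
/-- For an abelian group `A` and an integer `φ`, the subgroup
`A(φ) = {a ∈ A | φ • a = 0}` of elements annihilated by `φ`. -/
def annSubgroup (A : Type*) [AddCommGroup A] (φ : ℤ) : AddSubgroup A where
  carrier := {a | φ • a = 0}
  zero_mem' := smul_zero φ
  add_mem' := by
    intro a b ha hb
    simp only [Set.mem_setOf_eq] at *
    rw [smul_add, ha, hb, add_zero]
  neg_mem' := by
    intro a ha
    simp only [Set.mem_setOf_eq] at *
    rw [smul_neg, ha, neg_zero]

theorem matHom_mul {n : ℕ} (A : Type*) [AddCommGroup A]
    (M N : Matrix (Fin n) (Fin n) ℤ) (x : Fin n → A) :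
    matHom A (M * N) x = matHom A N (matHom A M x) := by
  funext j
  simp only [matHom, AddMonoidHom.coe_mk, ZeroHom.coe_mk, Matrix.mul_apply,
    Finset.sum_smul, Finset.smul_sum]
  rw [Finset.sum_comm]
  refine Finset.sum_congr rfl fun i _ => Finset.sum_congr rfl fun k _ => ?_
  rw [smul_smul, mul_comm]

theorem matHom_diagonal {n : ℕ} (A : Type*) [AddCommGroup A]
    (φ : Fin n → ℤ) (x : Fin n → A) (j : Fin n) :
    matHom A (Matrix.diagonal φ) x j = φ j • x j := by
  simp [matHom, Matrix.diagonal_apply, ite_smul]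

theorem matHom_one {n : ℕ} (A : Type*) [AddCommGroup A] (x : Fin n → A) :
    matHom A (1 : Matrix (Fin n) (Fin n) ℤ) x = x := by
  funext j
  rw [← Matrix.diagonal_one, matHom_diagonal, one_smul]

/-- If an n×n integer matrix `M` is equivalent via unimodular
matrices to the diagonal matrix with diagonal entries `φ 0, …, φ (n-1)`, then
for every abelian group `A` the kernel of `f_M : A^n → A^n` is isomorphic to
`∏ j, A(φ j)`. -/
theorem ker_iso_prod_ann_of_equiv_diagonal (n : ℕ)
    (M : Matrix (Fin n) (Fin n) ℤ) (φ : Fin n → ℤ)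
    (hequiv : ∃ (U₁ U₂ : Matrix (Fin n) (Fin n) ℤ),
      IsUnit U₁.det ∧ IsUnit U₂.det ∧ U₁ * M * U₂ = Matrix.diagonal φ)
    (A : Type*) [AddCommGroup A] :
    Nonempty ((matHom A M).ker ≃+ (∀ j : Fin n, annSubgroup A (φ j))) := by
  obtain ⟨U, V, hU, hV, h⟩ := hequiv
  have key : ∀ x, matHom A M (matHom A U x) = 0 ↔ ∀ j, φ j • x j = 0 := by
    intro x
    have e : ∀ j, φ j • x j = matHom A V (matHom A M (matHom A U x)) j := by
      intro j
      rw [← matHom_mul, ← matHom_mul, ← matHom_diagonal A φ, ← h, Matrix.mul_assoc]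
    constructor
    · intro hx j
      rw [e, hx, map_zero, Pi.zero_apply]
    · intro hx
      have h0 : matHom A V (matHom A M (matHom A U x)) = 0 := by
        funext j
        rw [← e, hx, Pi.zero_apply]
      rw [← matHom_one A (matHom A M (matHom A U x)), ← Matrix.mul_nonsing_inv V hV,
        matHom_mul, h0, map_zero]
  have r : ∀ y, matHom A U (matHom A U⁻¹ y) = y := fun y => by
    rw [← matHom_mul, Matrix.nonsing_inv_mul U hU, matHom_one]
  have l : ∀ y, matHom A U⁻¹ (matHom A U y) = y := fun y => by
    rw [← matHom_mul, Matrix.mul_nonsing_inv U hU, matHom_one]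
  exact ⟨{
    toFun := fun y j => ⟨matHom A U⁻¹ y.1 j, (key _).1 (by rw [r]; exact y.2) j⟩
    invFun := fun x => ⟨matHom A U fun j => (x j).1, (key _).2 fun j => (x j).2⟩
    left_inv := fun y => Subtype.ext (r y.1)
    right_inv := fun x => funext fun j => Subtype.ext (congrFun (l fun j => (x j).1) j)
    map_add' := fun y z => funext fun j => Subtype.ext
      (congrFun (map_add (matHom A U⁻¹) y.1 z.1) j) }⟩
end

section
/- Let D be an n×n diagonal integer matrix with non-negative diagonal entries d₀, …, d_{n−1} forming a decreasing divisibility chain (d_j ∣ d_{j−1} for 1 ≤ j ≤ n−1). Then for every k with 1 ≤ k ≤ n, the greatest common divisor of the determinants of all k×k submatrices of D equals the product d_{n−k}·d_{n−k+1}⋯d_{n−1} of the last k diagonal entries. -/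
theorem chain_dvd_aux (n : ℕ) (d : Fin n → ℤ)
    (hchain : ∀ a b : Fin n, (b : ℕ) = a + 1 → d b ∣ d a)
    (m : ℕ) (a b : Fin n) (h : (b : ℕ) = a + m) : d b ∣ d a := by
  induction m generalizing b with
  | zero =>
    have : b = a := Fin.ext h
    rw [this]
  | succ m ih =>
    have hb := b.isLt
    have hlt : (a : ℕ) + m < n := by omega
    exact (hchain ⟨a + m, hlt⟩ b (by simp only; omega)).trans (ih ⟨a + m, hlt⟩ rfl)

theorem strictMono_aux (n k : ℕ) (e : Fin k → Fin n) (he : StrictMono e) (m : ℕ) (i j : Fin k)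
    (h : (j : ℕ) = i + m) : (e i : ℕ) + m ≤ e j := by
  induction m generalizing j with
  | zero =>
    have : j = i := Fin.ext h
    simp [this]
  | succ m ih =>
    have hj := j.isLt
    have hlt : (i : ℕ) + m < k := by omega
    have h1 := ih ⟨i + m, hlt⟩ rfl
    have h2 : e ⟨i + m, hlt⟩ < e j := he (by rw [Fin.lt_def]; simp only; omega)
    rw [Fin.lt_def] at h2
    omega

theorem prod_dvd_aux (n : ℕ) (d : Fin n → ℤ)
    (hchain : ∀ a b : Fin n, (b : ℕ) = a + 1 → d b ∣ d a)
    (k : ℕ) (hk2 : k ≤ n) (φ : Fin k → Fin n) (hφ : ∀ j, (φ j : ℕ) = n - k + j)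
    (g : Fin k → Fin n) (hg : Function.Injective g) :
    ∏ j : Fin k, d (φ j) ∣ ∏ i, d (g i) := by
  have hc : (Finset.univ.image g).card = k := by
    rw [Finset.card_image_of_injective _ hg]; simp
  have h1 : ∏ i, d (g i) = ∏ x ∈ Finset.univ.image g, d x :=
    (Finset.prod_image (fun a _ b _ h => hg h)).symm
  have h2 : ∏ x ∈ Finset.univ.image g, d x =
      ∏ i, d ((Finset.univ.image g).orderEmbOfFin hc i) := by
    conv_lhs => rw [← Finset.image_orderEmbOfFin_univ (Finset.univ.image g) hc]
    exact Finset.prod_image (fun a _ b _ h => ((Finset.univ.image g).orderEmbOfFin hc).injective h)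
  rw [h1, h2]
  apply Finset.prod_dvd_prod_of_dvd
  intro i _
  have hi := i.isLt
  have hlt : k - 1 < k := by omega
  have hm := strictMono_aux n k _ ((Finset.univ.image g).orderEmbOfFin hc).strictMono
    (k - 1 - i) i ⟨k - 1, hlt⟩ (by simp only; omega)
  generalize (Finset.univ.image g).orderEmbOfFin hc = e at hm
  have h3 := (e ⟨k - 1, hlt⟩).isLt
  have h4 := hφ i
  exact chain_dvd_aux n d hchain (φ i - e i) (e i) (φ i) (by omega)

/-- If `D` is the n×n diagonal integer matrix with non-negative
diagonal entries `d 0, …, d (n-1)` forming a decreasing divisibility chain,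
then for `1 ≤ k ≤ n` the gcd of the determinants of all k×k submatrices of `D`
equals the product of the last `k` diagonal entries. -/
theorem gcd_minors_of_diagonal_chain (n : ℕ) (d : Fin n → ℤ)
    (hnonneg : ∀ j, 0 ≤ d j)
    (hchain : ∀ (j : ℕ) (hj : j + 1 < n), d ⟨j + 1, hj⟩ ∣ d ⟨j, by omega⟩)
    (k : ℕ) (hk1 : 1 ≤ k) (hk2 : k ≤ n) :
    (Finset.univ.filter (fun p : (Fin k → Fin n) × (Fin k → Fin n) =>
        Function.Injective p.1 ∧ Function.Injective p.2)).gcd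
      (fun p => ((Matrix.diagonal d).submatrix p.1 p.2).det) =
    ∏ j : Fin k, d ⟨n - k + (j : ℕ), by have := j.isLt; omega⟩ := by
  have hP : 0 ≤ ∏ j : Fin k, d ⟨n - k + (j : ℕ), by have := j.isLt; omega⟩ :=
    Finset.prod_nonneg (fun j _ => hnonneg _)
  refine dvd_antisymm_of_normalize_eq Finset.normalize_gcd (Int.normalize_of_nonneg hP) ?_ ?_
  · let f : Fin k → Fin n := fun j => ⟨n - k + (j : ℕ), by have := j.isLt; omega⟩
    have hf : Function.Injective f := by
      intro a b h
      simp only [f, Fin.mk.injEq] at h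
      exact Fin.ext (by omega)
    have h := Finset.gcd_dvd (f := fun p : (Fin k → Fin n) × (Fin k → Fin n) =>
      ((Matrix.diagonal d).submatrix p.1 p.2).det) (s := Finset.univ.filter
        (fun p : (Fin k → Fin n) × (Fin k → Fin n) =>
        Function.Injective p.1 ∧ Function.Injective p.2)) (b := (f, f)) (by simp [hf])
    simp only [Matrix.submatrix_diagonal d f hf, Matrix.det_diagonal] at h
    exact h
  · apply Finset.dvd_gcd
    rintro ⟨f, g⟩ hfg
    simp only [Finset.mem_filter, Finset.mem_univ, true_and] at hfg
    rw [Matrix.det_apply]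
    apply Finset.dvd_sum
    intro σ _
    rw [Units.smul_def, smul_eq_mul]
    apply Dvd.dvd.mul_left
    by_cases h : ∀ i, f (σ i) = g i
    · simp only [Matrix.submatrix_apply, h, Matrix.diagonal_apply_eq]
      refine prod_dvd_aux n d ?_ k hk2 _ (fun j => rfl) g hfg.2
      rintro ⟨a, ha⟩ ⟨b, hb⟩ hab
      simp only at hab
      subst hab
      exact hchain a hb
    · push Not at h
      obtain ⟨i, hi⟩ := h
      have hz : ∏ i, ((Matrix.diagonal d).submatrix f g) (σ i) i = 0 :=
        Finset.prod_eq_zero (Finset.mem_univ i) (by simp [Matrix.diagonal_apply_ne _ hi])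
      simp only [hz, dvd_zero]
end
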